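/- Let k be a field, R a commutative k-algebra with k-algebra automorphism σ, and Q = R[t^{±1}; σ]. Let B be a connected finitely graded subalgebra of Q (so B ∩ Q_0 = k·1). Then there exists a finitely graded subalgebra C of Q which is connected, is generated as a k-algebra by its degree-one component C ∩ Q_1, and satisfies B ∩ Q_n ⊆ C ∩ Q_n for all n ≥ 1. Explicitly, if B is generated in degrees ≤ m and B = ⊕_{n≥0} W_n t^n, one may take C to be the subalgebra generated by W·t where W = k + Σ_{n=1}^{m} W_n. (Reduction step in the proof of Proposition 1.3.) -/

import Mathlib

/-!
Write `L n = ι(R) tⁿ` and `V = W t`, where `W = k + W₁ + ⋯ + W_m`, so that `V ≤ L 1` is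
finite-dimensional. The algebra `C` generated by `V` is the sum of the powers `Vⁿ`, and `Vⁿ ≤ L n`
by the twist relation. The spaces `L n` are independent, so the modular law forces `C ∩ L n = Vⁿ`
for `n ≥ 0` and `C ∩ L n = 0` for `n < 0` (`inf_eq_of_iSupIndep`). Gradedness, local finiteness,
connectedness (`V⁰ = k`) and generation in degree one (`V¹ = V`) can then be read off.

For the containment, `1 ∈ W` gives `t ∈ C`, so that `r tⁿ = (r t) tⁿ⁻¹ ∈ C` for `r ∈ W_n`,
`1 ≤ n ≤ m`; together with `B ∩ L 0 = k` this puts all generators of `B` in `C`.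
-/

open Filter

/-- GK dimension of a `k`-algebra `B`, valued in `ℝ≥0∞`. -/
noncomputable def gkDim (k B : Type*) [Field k] [Ring B] [Algebra k B] : ENNReal :=
  ⨆ (V : Submodule k B) (_ : FiniteDimensional k V),
    Filter.limsup (fun n : ℕ =>
      ENNReal.ofReal (Real.log (Module.finrank k ↥(V ^ n) : ℝ) / Real.log (n : ℝ)))
      Filter.atTop

/-- `B` has exponential growth. -/
def HasExpGrowth (k B : Type*) [Field k] [Ring B] [Algebra k B] : Prop :=
  1 < ⨆ (V : Submodule k B) (_ : FiniteDimensional k V),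
    Filter.limsup (fun n : ℕ =>
      ENNReal.ofReal ((Module.finrank k ↥(V ^ n) : ℝ) ^ ((n : ℝ)⁻¹))) Filter.atTop

/-- degree-`n` component `ι(R)·tⁿ` of the skew Laurent ring. -/
noncomputable def laurentComp {k R Q : Type*} [Field k] [Ring R] [Algebra k R]
    [Ring Q] [Algebra k Q] (ι : R →ₐ[k] Q) (t : Qˣ) (n : ℤ) : Submodule k Q :=
  LinearMap.range ((LinearMap.mulRight k ((t ^ n : Qˣ) : Q)).comp ι.toLinearMap)

/-- coefficient space `V_n = {r : R | ι(r) tⁿ ∈ A}` of a subalgebra. -/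
noncomputable def coeffSpace {k R Q : Type*} [Field k] [Ring R] [Algebra k R]
    [Ring Q] [Algebra k Q] (ι : R →ₐ[k] Q) (t : Qˣ) (A : Subalgebra k Q) (n : ℤ) :
    Submodule k R :=
  Submodule.comap ((LinearMap.mulRight k ((t ^ n : Qˣ) : Q)).comp ι.toLinearMap)
    A.toSubmodule

/-- `Q` is the skew Laurent polynomial ring `R[t^{±1}; σ]` via the embedding `ι`. -/
structure IsSkewLaurent (k : Type*) {R Q : Type*} [Field k] [Ring R] [Algebra k R]
    [Ring Q] [Algebra k Q] (σ : R ≃ₐ[k] R) (ι : R →ₐ[k] Q) (t : Qˣ) : Prop where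
  twist : ∀ r : R, (t : Q) * ι r = ι (σ r) * (t : Q)
  basis : ∀ q : Q, ∃! f : ℤ →₀ R, q = f.sum fun n r => ι r * ((t ^ n : Qˣ) : Q)

section Graded

variable {k R Q : Type*} [Field k] [Ring R] [Algebra k R] [Ring Q] [Algebra k Q]

/-- `A` is a graded subalgebra of `Q`: `A = ⊕ₙ (A ∩ Qₙ)`. -/
def IsGradedSub (ι : R →ₐ[k] Q) (t : Qˣ) (A : Subalgebra k Q) : Prop :=
  A.toSubmodule = ⨆ n : ℤ, (A.toSubmodule ⊓ laurentComp ι t n)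

/-- `A` is an ℕ-graded subalgebra of `Q`. -/
def IsNGradedSub (ι : R →ₐ[k] Q) (t : Qˣ) (A : Subalgebra k Q) : Prop :=
  IsGradedSub ι t A ∧ ∀ n : ℤ, n < 0 → A.toSubmodule ⊓ laurentComp ι t n = ⊥

/-- `A` is locally finite. -/
def IsLocFin (ι : R →ₐ[k] Q) (t : Qˣ) (A : Subalgebra k Q) : Prop :=
  ∀ n : ℤ, FiniteDimensional k ↥(A.toSubmodule ⊓ laurentComp ι t n)

/-- `A` is finitely graded: ℕ-graded, locally finite, finitely generated. -/
def IsFinGraded (ι : R →ₐ[k] Q) (t : Qˣ) (A : Subalgebra k Q) : Prop :=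
  IsNGradedSub ι t A ∧ IsLocFin ι t A ∧ A.FG

/-- `A` is connected: `A₀ = k·1`. -/
def IsConnectedSub (ι : R →ₐ[k] Q) (t : Qˣ) (A : Subalgebra k Q) : Prop :=
  A.toSubmodule ⊓ laurentComp ι t 0 = (1 : Submodule k Q)

end Graded

section Big

variable {k R Q : Type*} [Field k] [CommRing R] [Algebra k R] [Ring Q] [Algebra k Q]

/-- `A` is a big (locally finite ℕ-graded) subalgebra of `Q = R[t^{±1};σ]`. -/
def IsBigSub (ι : R →ₐ[k] Q) (t : Qˣ) (A : Subalgebra k Q) : Prop :=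
  IsNGradedSub ι t A ∧ IsLocFin ι t A ∧
  ∃ n : ℤ, 1 ≤ n ∧ ∃ u : Rˣ, (u : R) ∈ coeffSpace ι t A n ∧
    ∃ M : Submonoid (Algebra.adjoin k
        ((fun r => r * ((u⁻¹ : Rˣ) : R)) '' ↑(coeffSpace ι t A n))),
      M ≤ nonZeroDivisors _ ∧ IsLocalization M R

end Big

/-- If `V n ≤ L n` for an independent family `L`, then the `n`-th component of `⨆ i, V i` is
`V n`; this is the modular law. -/
lemma inf_eq_of_iSupIndep {k M : Type*} [Field k] [AddCommGroup M] [Module k M]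
    {L V : ℤ → Submodule k M} (hL : iSupIndep L) (hV : ∀ n, V n ≤ L n) (n : ℤ) :
    (⨆ i, V i) ⊓ L n = V n := by
  have h1 : (⨆ i, V i) = V n ⊔ ⨆ (i) (_ : i ≠ n), V i := le_antisymm
    (iSup_le fun i => if h : i = n then h ▸ le_sup_left else
      le_sup_of_le_right (le_iSup₂_of_le i h le_rfl))
    (sup_le (le_iSup V n) (iSup₂_le fun i _ => le_iSup V i))
  have h2 : Disjoint (L n) (⨆ (i) (_ : i ≠ n), V i) :=
    (hL n).mono_right (iSup₂_mono fun i _ => hV i)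
  rw [h1, sup_inf_assoc_of_le _ (hV n), inf_comm, h2.eq_bot, sup_bot_eq]

/-- The algebra generated by a subspace is the sum of the powers of that subspace. -/
lemma adjoin_toSubmodule_eq_iSup_pow {k A : Type*} [Field k] [Ring A] [Algebra k A]
    (V : Submodule k A) :
    (Algebra.adjoin k (V : Set A)).toSubmodule = ⨆ n : ℕ, V ^ n := by
  apply le_antisymm
  · rw [Algebra.adjoin_eq_span, Submodule.span_le]
    intro x hx
    have : ∃ n : ℕ, x ∈ V ^ n := by
      induction hx using Submonoid.closure_induction with
      | mem x hx => exact ⟨1, by simpa using hx⟩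
      | one => exact ⟨0, by rw [pow_zero]; exact Submodule.one_le.1 le_rfl⟩
      | mul x y _ _ hx hy =>
        obtain ⟨a, ha⟩ := hx
        obtain ⟨b, hb⟩ := hy
        exact ⟨a + b, by rw [pow_add]; exact Submodule.mul_mem_mul ha hb⟩
    obtain ⟨n, hn⟩ := this
    exact Submodule.mem_iSup_of_mem n hn
  · refine iSup_le fun n => ?_
    induction n with
    | zero =>
      rw [pow_zero, Submodule.one_le]
      exact one_mem (Algebra.adjoin k (V : Set A))
    | succ n ih =>
      rw [pow_succ, Submodule.mul_le]
      intro x hx y hy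
      exact mul_mem (S := Subalgebra k A) (ih hx) (Algebra.subset_adjoin hy)

section SkewLaurent

variable {k R Q : Type*} [Field k] [CommRing R] [Algebra k R] [Ring Q] [Algebra k Q]
  {σ : R ≃ₐ[k] R} {ι : R →ₐ[k] Q} {t : Qˣ}

lemma mem_laurentComp {n : ℤ} {q : Q} :
    q ∈ laurentComp ι t n ↔ ∃ r : R, ι r * ((t ^ n : Qˣ) : Q) = q := by
  simp [laurentComp]

/-- The `k`-linear map `(r_n)ₙ ↦ ∑ₙ r_n tⁿ`. -/
noncomputable def laurentSum (ι : R →ₐ[k] Q) (t : Qˣ) : (ℤ →₀ R) →ₗ[k] Q :=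
  Finsupp.lsum k fun n => (LinearMap.mulRight k ((t ^ n : Qˣ) : Q)).comp ι.toLinearMap

lemma laurentSum_injective (hQ : IsSkewLaurent k σ ι t) :
    Function.Injective (laurentSum ι t) := by
  intro f g h
  exact (hQ.basis (laurentSum ι t f)).unique rfl h

lemma laurentSum_single (n : ℤ) (r : R) :
    laurentSum ι t (Finsupp.single n r) = ι r * ((t ^ n : Qˣ) : Q) := by
  simp [laurentSum]

lemma map_laurentSum (n : ℤ) :
    Submodule.map (laurentSum ι t) (LinearMap.range (Finsupp.lsingle n : R →ₗ[k] ℤ →₀ R)) =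
      laurentComp ι t n := by
  rw [← LinearMap.range_comp, laurentComp]
  congr 1
  ext r
  exact laurentSum_single n r

lemma iSupIndep_laurentComp (hQ : IsSkewLaurent k σ ι t) : iSupIndep (laurentComp ι t) := by
  intro n
  have h := Finsupp.disjoint_lsingle_lsingle (R := k) (M := R) ({n} : Set ℤ) {n}ᶜ
    disjoint_compl_right
  have h2 := Submodule.disjoint_map (laurentSum_injective hQ) h
  simpa [Submodule.map_iSup, map_laurentSum] using h2

/-- Powers of a subspace of degree-one elements lie in the expected degree; this is where the
twist relation is used. -/
lemma pow_le_laurentComp (hQ : IsSkewLaurent k σ ι t) {V : Submodule k Q}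
    (hV : V ≤ laurentComp ι t 1) (n : ℕ) : V ^ n ≤ laurentComp ι t n := by
  induction n with
  | zero =>
    rw [pow_zero, Submodule.one_le, mem_laurentComp]
    exact ⟨1, by simp⟩
  | succ n ih =>
    rw [pow_succ', Submodule.mul_le]
    intro x hx y hy
    obtain ⟨r, rfl⟩ := mem_laurentComp.1 (hV hx)
    obtain ⟨s, rfl⟩ := mem_laurentComp.1 (ih hy)
    refine mem_laurentComp.2 ⟨r * σ s, ?_⟩
    have h1 : ((t ^ ((n + 1 : ℕ) : ℤ) : Qˣ) : Q) = (t : Q) * ((t ^ (n : ℤ) : Qˣ) : Q) := by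
      rw [← Units.val_mul, Nat.cast_succ, add_comm, zpow_add, zpow_one]
    rw [h1, zpow_one, map_mul]
    simp only [mul_assoc]
    rw [← mul_assoc (t : Q) (ι s), hQ.twist, mul_assoc]

lemma mulRight_comp_injective (hQ : IsSkewLaurent k σ ι t) (n : ℤ) :
    Function.Injective ((LinearMap.mulRight k ((t ^ n : Qˣ) : Q)).comp ι.toLinearMap) := by
  intro r s h
  refine Finsupp.single_injective n (laurentSum_injective hQ ?_)
  rw [laurentSum_single, laurentSum_single]
  exact h

lemma coeffSpace_fg (hQ : IsSkewLaurent k σ ι t) {A : Subalgebra k Q}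
    (hA : IsLocFin ι t A) (n : ℤ) : (coeffSpace ι t A n).FG := by
  refine Submodule.fg_of_fg_map_injective _ (mulRight_comp_injective hQ n) ?_
  rw [coeffSpace, Submodule.map_comap_eq, inf_comm]
  exact Module.Finite.iff_fg.1 (hA n)

end SkewLaurent

/-- Reduction step in the proof of Proposition 1.3: a connected finitely graded
subalgebra of `Q` is contained (in positive degrees) in a connected finitely graded
subalgebra generated in degree one. -/
theorem connected_contained_in_degree_one_generated (k R Q : Type*) [Field k] [CommRing R]
    [Algebra k R] [Ring Q] [Algebra k Q] (σ : R ≃ₐ[k] R) (ι : R →ₐ[k] Q) (t : Qˣ)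
    (hQ : IsSkewLaurent k σ ι t)
    (B : Subalgebra k Q) (hBfg : IsFinGraded ι t B) (hBconn : IsConnectedSub ι t B)
    (m : ℕ)
    (hBgen : Algebra.adjoin k
      (↑(⨆ n ∈ Set.Icc (0 : ℤ) (m : ℤ), B.toSubmodule ⊓ laurentComp ι t n) : Set Q) = B) :
    ∃ C : Subalgebra k Q,
      IsFinGraded ι t C ∧ IsConnectedSub ι t C ∧
      Algebra.adjoin k (↑(C.toSubmodule ⊓ laurentComp ι t 1) : Set Q) = C ∧
      (∀ n : ℤ, 1 ≤ n → B.toSubmodule ⊓ laurentComp ι t n ≤ C.toSubmodule ⊓ laurentComp ι t n) ∧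
      C = Algebra.adjoin k ((fun r : R => ι r * (t : Q)) ''
            ↑((1 : Submodule k R) ⊔ ⨆ n ∈ Finset.Icc (1 : ℤ) (m : ℤ), coeffSpace ι t B n)) := by
  classical
  obtain ⟨-, hBlf, -⟩ := hBfg
  set W : Submodule k R :=
    (1 : Submodule k R) ⊔ ⨆ n ∈ Finset.Icc (1 : ℤ) (m : ℤ), coeffSpace ι t B n with hW
  have hWfg : W.FG := by
    refine Submodule.FG.sup ?_ (Submodule.fg_biSup _ _ fun n _ =>
      coeffSpace_fg hQ hBlf n)
    rw [Submodule.one_eq_span]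
    exact Submodule.fg_span_singleton 1
  set V : Submodule k Q :=
    W.map ((LinearMap.mulRight k (t : Q)).comp ι.toLinearMap) with hVdef
  have hVfg : V.FG := hWfg.map _
  have hset : ((fun r : R => ι r * (t : Q)) '' (W : Set R)) = (V : Set Q) := by
    ext x; simp [hVdef]
  have hV1 : V ≤ laurentComp ι t 1 := by
    rintro _ ⟨r, -, rfl⟩
    exact mem_laurentComp.2 ⟨r, by simp⟩
  rw [hset]
  set C := Algebra.adjoin k (V : Set Q) with hC
  -- the powers of `V`, extended by zero to negative degrees
  let V' : ℤ → Submodule k Q := fun n => if 0 ≤ n then V ^ n.toNat else ⊥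
  have hV'le : ∀ n, V' n ≤ laurentComp ι t n := by
    intro n
    by_cases hn : 0 ≤ n
    · have := pow_le_laurentComp hQ hV1 n.toNat
      rw [Int.toNat_of_nonneg hn] at this
      simpa [V', hn] using this
    · simp [V', hn]
  have hCsup : C.toSubmodule = ⨆ n, V' n := by
    rw [hC, adjoin_toSubmodule_eq_iSup_pow]
    refine le_antisymm (iSup_le fun n => ?_) (iSup_le fun n => ?_)
    · refine le_trans (le_of_eq ?_) (le_iSup V' (n : ℤ))
      simp [V']
    · by_cases hn : 0 ≤ n
      · simpa [V', hn] using le_iSup (fun n : ℕ => V ^ n) n.toNat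
      · simp [V', hn]
  have hcomp : ∀ n, C.toSubmodule ⊓ laurentComp ι t n = V' n := by
    intro n
    rw [hCsup]
    exact inf_eq_of_iSupIndep (iSupIndep_laurentComp hQ) hV'le n
  have hVC : ∀ r ∈ W, ι r * (t : Q) ∈ C := fun r hr =>
    Algebra.subset_adjoin (Submodule.mem_map_of_mem
      (f := (LinearMap.mulRight k (t : Q)).comp ι.toLinearMap) hr)
  have htC : (t : Q) ∈ C := by
    have h1 : (1 : R) ∈ W := Submodule.mem_sup_left (Submodule.one_le.1 le_rfl)
    simpa using hVC 1 h1
  have hBC : B ≤ C := by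
    rw [← hBgen, Algebra.adjoin_le_iff]
    suffices h : (⨆ n ∈ Set.Icc (0 : ℤ) (m : ℤ), B.toSubmodule ⊓ laurentComp ι t n) ≤
        C.toSubmodule from h
    refine iSup₂_le fun n hn => ?_
    rcases hn.1.eq_or_lt with h0 | h0
    · rw [← h0, hBconn, Submodule.one_le]
      exact one_mem C
    · rintro x ⟨hxB, hx⟩
      obtain ⟨r, rfl⟩ := mem_laurentComp.1 hx
      have hrW : r ∈ W := by
        refine Submodule.mem_sup_right ?_
        exact Submodule.mem_iSup_of_mem n
          (Submodule.mem_iSup_of_mem (Finset.mem_Icc.2 ⟨h0, hn.2⟩) hxB)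
      obtain ⟨j, rfl⟩ : ∃ j : ℕ, n = j + 1 := ⟨(n - 1).toNat, by omega⟩
      have h1 : ((t ^ ((j : ℤ) + 1) : Qˣ) : Q) = (t : Q) * (t : Q) ^ j := by
        rw [add_comm, zpow_add, zpow_one, zpow_natCast, Units.val_mul, Units.val_pow_eq_pow_val]
      rw [h1, ← mul_assoc]
      exact mul_mem (S := Subalgebra k Q) (hVC r hrW) (pow_mem htC j)
  refine ⟨C, ⟨⟨?_, ?_⟩, ?_, ?_⟩, ?_, ?_, ?_, rfl⟩
  · unfold IsGradedSub
    simp only [hcomp]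
    exact hCsup
  · intro n hn
    rw [hcomp]
    simp [V', not_le.2 hn]
  · intro n
    rw [hcomp]
    refine Module.Finite.iff_fg.2 ?_
    by_cases hn : 0 ≤ n
    · simpa [V', hn] using hVfg.pow n.toNat
    · simpa [V', hn] using Submodule.fg_bot
  · obtain ⟨s, hs⟩ := hVfg
    exact ⟨s, by rw [hC, ← hs, Algebra.adjoin_span]⟩
  · unfold IsConnectedSub
    rw [hcomp]
    simp [V']
  · rw [hcomp]
    simp [V', hC]
  · intro n _
    exact inf_le_inf_right _ hBC
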